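/- Let k be an algebraic closure of 𝔽₂ and K = k(t) the rational function field over k. The group of points of the Weierstrass curve W : y² + t²xy + y = x³ over K is isomorphic, as an abelian group, to ℤ/6ℤ. -/

import Mathlib

/-- An algebraic closure `k` of `𝔽₂`. -/
noncomputable abbrev k : Type := AlgebraicClosure (ZMod 2)

/-- The rational function field `K = k(t)`. -/
noncomputable abbrev K : Type := RatFunc k

/-- The variable `t` of `K = k(t)`. -/
noncomputable def t : K := RatFunc.X

/-- The Weierstrass curve `W : y² + t²xy + y = x³` over `K`. -/
noncomputable def W : WeierstrassCurve.Affine K :=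
  { a₁ := t ^ 2, a₂ := 0, a₃ := 1, a₄ := 0, a₆ := 0 }

section Hesse

open Polynomial

variable {F : Type*} [Field F]

/-- No prime divides all three polynomials. -/
def NoCommon (a b c : F[X]) : Prop := ∀ p : F[X], Prime p → p ∣ a → p ∣ b → ¬ p ∣ c

lemma dvd_of_dvd_cube {p a : F[X]} (hp : Prime p) (h : p ∣ a ^ 3) : p ∣ a :=
  hp.dvd_of_dvd_pow h

lemma cube_of_coprime [IsAlgClosed F] {p q r : F[X]} (h : IsCoprime p q) (e : p * q = r ^ 3) :
    ∃ s, p = s ^ 3 := by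
  obtain ⟨d, u, hu⟩ := exists_associated_pow_of_mul_eq_pow' h e
  obtain ⟨c, hc, hcu⟩ := Polynomial.isUnit_iff.mp u.isUnit
  obtain ⟨z, hz⟩ := IsAlgClosed.exists_pow_nat_eq c (n := 3) (by norm_num)
  refine ⟨d * C z, ?_⟩
  rw [← hu, ← hcu, ← hz]
  simp [mul_pow]

lemma exists_omega (F : Type*) [Field F] [IsAlgClosed F] : ∃ w : F, w ^ 2 + w + 1 = 0 := by
  have hd : (X ^ 2 + X + 1 : F[X]).degree = 2 := by compute_degree!
  obtain ⟨w, hw⟩ := IsAlgClosed.exists_root (X ^ 2 + X + 1 : F[X]) (by rw [hd]; norm_num)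
  exact ⟨w, by simpa [IsRoot] using hw⟩

lemma eq_of_cube_eq [CharP F 2] {w : F} (hw : w ^ 2 + w + 1 = 0) {s m : F[X]}
    (h : s ^ 3 = m ^ 3) : ∃ z : F, z ^ 3 = 1 ∧ s = C z * m := by
  have h2 : (2 : F[X]) = 0 := CharTwo.two_eq_zero
  have hw' : (C w) ^ 2 + C w + 1 = (0 : F[X]) := by
    rw [← C_pow, ← C_add, ← C_1, ← C_add, hw, C_0]
  have hw3 : w ^ 3 = 1 := by grind
  have : (s - m) * ((s - C w * m) * (s - C w ^ 2 * m)) = 0 := by grind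
  rcases mul_eq_zero.mp this with h | h
  · exact ⟨1, by simp, by simpa [sub_eq_zero] using h⟩
  rcases mul_eq_zero.mp h with h | h
  · exact ⟨w, hw3, by simpa [sub_eq_zero] using h⟩
  · exact ⟨w ^ 2, by grind, by simpa [sub_eq_zero] using h⟩

lemma coprime_of {a b c p q : F[X]} (h : NoCommon a b c)
    (H : ∀ z, Prime z → z ∣ p → z ∣ q → z ∣ a ∧ z ∣ b ∧ z ∣ c) : IsCoprime p q := by
  apply isCoprime_of_prime_dvd
  · rintro ⟨rfl, rfl⟩
    obtain ⟨h1, h2, h3⟩ := H X prime_X (dvd_zero _) (dvd_zero _)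
    exact h X prime_X h1 h2 h3
  · intro z hz h1 h2
    obtain ⟨h1, h2, h3⟩ := H z hz h1 h2
    exact h z hz h1 h2 h3

lemma cube3 [CharP F 2] [IsAlgClosed F] {p q r s : F[X]} (hpq : IsCoprime p q)
    (hqr : IsCoprime q r) (hpr : IsCoprime p r) (h : p * q * r = s ^ 3) :
    ∃ e f g : F[X], p = e ^ 3 ∧ q = f ^ 3 ∧ r = g ^ 3 ∧ s = e * f * g := by
  obtain ⟨w, hw⟩ := exists_omega F
  obtain ⟨e, rfl⟩ := cube_of_coprime (r := s) (IsCoprime.mul_right hpq hpr) (by rw [← h]; ring)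
  obtain ⟨f, rfl⟩ := cube_of_coprime (r := s) (IsCoprime.mul_right hpq.symm hqr)
    (by rw [← h]; ring)
  obtain ⟨g, rfl⟩ := cube_of_coprime (r := s) (IsCoprime.mul_right hpr.symm hqr.symm)
    (by rw [← h]; ring)
  obtain ⟨z, hz, hs⟩ := eq_of_cube_eq hw (s := s) (m := e * f * g) (by rw [← h]; ring)
  refine ⟨C z * e, f, g, ?_, rfl, rfl, by rw [hs]; ring⟩
  rw [mul_pow, ← C_pow, hz]; simp

/-- Primitive solutions of the Hesse cubic. -/
def Sol (a b c : F[X]) : Prop := a ^ 3 + b ^ 3 + c ^ 3 = X * a * b * c ∧ NoCommon a b c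

lemma Sol.rot {a b c : F[X]} (h : Sol a b c) : Sol b c a :=
  ⟨by linear_combination h.1, fun p hp hb hc ha => h.2 p hp ha hb hc⟩

/-- The flex tangents. -/
noncomputable def T (w : F) (a b c : F[X]) (j : Fin 3) : F[X] :=
  X * a + C w ^ (j : ℕ) * b + C w ^ (2 * (j : ℕ)) * c

/-- The bad places. -/
noncomputable def rho (w : F) (r : Fin 3) : F[X] := X + C (w ^ (r : ℕ))

lemma Cw {w : F} (hw : w ^ 2 + w + 1 = 0) : (C w) ^ 2 + C w + 1 = (0 : F[X]) := by
  rw [← C_pow, ← C_add, ← C_1, ← C_add, hw, C_0]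

variable [CharP F 2]

lemma prod_T {w : F} (hw : w ^ 2 + w + 1 = 0) {a b c : F[X]} (h : Sol a b c) :
    T w a b c 0 * T w a b c 1 * T w a b c 2 = (X ^ 3 + 1) * a ^ 3 := by
  have h2 : (2 : F[X]) = 0 := CharTwo.two_eq_zero
  have hw := Cw hw
  have := h.1
  simp only [T, Fin.val_zero, Fin.val_one, Fin.val_two]
  generalize C w = v at *
  generalize (X : F[X]) = x at *
  grind

lemma sum_T {w : F} (hw : w ^ 2 + w + 1 = 0) (a b c : F[X]) :
    T w a b c 0 + T w a b c 1 + T w a b c 2 = X * a := by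
  have h2 : (2 : F[X]) = 0 := CharTwo.two_eq_zero
  have hw := Cw hw
  simp only [T, Fin.val_zero, Fin.val_one, Fin.val_two]
  generalize C w = v at *
  generalize (X : F[X]) = x at *
  grind

lemma prod_rho {w : F} (hw : w ^ 2 + w + 1 = 0) :
    rho w 0 * rho w 1 * rho w 2 = X ^ 3 + 1 := by
  have h2 : (2 : F[X]) = 0 := CharTwo.two_eq_zero
  have hw := Cw hw
  simp only [rho, Fin.val_zero, Fin.val_one, Fin.val_two, C_pow]
  generalize C w = v at *
  generalize (X : F[X]) = x at *
  grind

/-- two flex tangents and `a` generate everything -/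
lemma dvd_bc {w : F} (hw : w ^ 2 + w + 1 = 0) {a b c z : F[X]} {i j : Fin 3} (hij : i ≠ j)
    (ha : z ∣ a) (hi : z ∣ T w a b c i) (hj : z ∣ T w a b c j) : z ∣ b ∧ z ∣ c := by
  have h2 : (2 : F[X]) = 0 := CharTwo.two_eq_zero
  have hw := Cw hw
  obtain ⟨a, rfl⟩ := ha
  obtain ⟨p, hp⟩ := hi
  obtain ⟨q, hq⟩ := hj
  simp only [T] at hp hq
  generalize C w = v at *
  generalize (X : F[X]) = x at *
  have key : ∀ s : F[X], (∃ l m n, s = l * (z * p) + m * (z * q) + n * (z * a)) → z ∣ s := by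
    rintro s ⟨l, m, n, rfl⟩
    exact ⟨l * p + m * q + n * a, by ring⟩
  have hv3 : v ^ 3 = 1 := by grind
  fin_cases i <;> fin_cases j <;> simp at hij hp hq
  · exact ⟨key b ⟨v^2, v^0, (v^0+v^2)*x, by grind⟩, key c ⟨v^1, v^0, (v^0+v^1)*x, by grind⟩⟩
  · exact ⟨key b ⟨v^4, v^0, (v^0+v^4)*x, by grind⟩, key c ⟨v^2, v^0, (v^0+v^2)*x, by grind⟩⟩
  · exact ⟨key b ⟨v^0, v^2, (v^2+v^0)*x, by grind⟩, key c ⟨v^0, v^1, (v^1+v^0)*x, by grind⟩⟩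
  · exact ⟨key b ⟨v^4, v^2, (v^2+v^4)*x, by grind⟩, key c ⟨v^2, v^1, (v^1+v^2)*x, by grind⟩⟩
  · exact ⟨key b ⟨v^0, v^4, (v^4+v^0)*x, by grind⟩, key c ⟨v^0, v^2, (v^2+v^0)*x, by grind⟩⟩
  · exact ⟨key b ⟨v^2, v^4, (v^4+v^2)*x, by grind⟩, key c ⟨v^1, v^2, (v^2+v^1)*x, by grind⟩⟩

lemma T_eq_cubes [IsAlgClosed F] {w : F} (hw : w ^ 2 + w + 1 = 0) {a b c : F[X]}
    (h : Sol a b c) {s : Fin 3 → F[X]} (hs : s 0 * s 1 * s 2 = X ^ 3 + 1)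
    (hd : ∀ j, s j ∣ T w a b c j) :
    ∃ e : Fin 3 → F[X], (∀ j, T w a b c j = s j * e j ^ 3) ∧ a = e 0 * e 1 * e 2 := by
  choose q hq using hd
  have hne : (X ^ 3 + 1 : F[X]) ≠ 0 := by
    intro h0
    have := congrArg (Polynomial.eval 0) h0
    simp at this
  have hp : q 0 * q 1 * q 2 = a ^ 3 := by
    apply mul_left_cancel₀ hne
    rw [← prod_T hw h, hq 0, hq 1, hq 2, ← hs]
    ring
  have hco : ∀ i j, i ≠ j → q i ∣ a ^ 3 → IsCoprime (q i) (q j) := by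
    intro i j hij hia
    refine coprime_of h.2 fun z hz hi hj => ?_
    have ha := dvd_of_dvd_cube hz (hi.trans hia)
    refine ⟨ha, dvd_bc hw hij ha ?_ ?_⟩
    · rw [hq i]; exact hi.mul_left _
    · rw [hq j]; exact hj.mul_left _
  obtain ⟨e, f, g, h0, h1, h2, ha⟩ := cube3 (hco 0 1 (by decide) ⟨q 1 * q 2, by rw [← hp]; ring⟩)
    (hco 1 2 (by decide) ⟨q 0 * q 2, by rw [← hp]; ring⟩)
    (hco 0 2 (by decide) ⟨q 1 * q 2, by rw [← hp]; ring⟩) hp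
  refine ⟨![e, f, g], fun j => ?_, by simpa using ha⟩
  rw [hq j]
  fin_cases j <;> simp [h0, h1, h2]

lemma natDegree_sum_ge {p q r : F[X]} (h1 : p.natDegree ≠ q.natDegree)
    (h2 : q.natDegree ≠ r.natDegree) (h3 : p.natDegree ≠ r.natDegree) :
    p.natDegree ≤ (p + q + r).natDegree := by
  rcases lt_or_gt_of_ne h1 with h | h
  · have := natDegree_add_eq_right_of_natDegree_lt h
    rcases lt_or_gt_of_ne h2 with h' | h'
    · rw [natDegree_add_eq_right_of_natDegree_lt (by omega)]; omega
    · rw [natDegree_add_eq_left_of_natDegree_lt (by omega)]; omega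
  · have := natDegree_add_eq_left_of_natDegree_lt h
    rcases lt_or_gt_of_ne h3 with h' | h'
    · rw [natDegree_add_eq_right_of_natDegree_lt (by omega)]; omega
    · rw [natDegree_add_eq_left_of_natDegree_lt (by omega)]; omega

lemma natDegree_X3 : (X ^ 3 + 1 : F[X]).natDegree = 3 := by compute_degree!

lemma not_distinct {w : F} (hw : w ^ 2 + w + 1 = 0) {a b c : F[X]}
    (h : Sol a b c) (ha : a ≠ 0)
    (h01 : (T w a b c 0).natDegree ≠ (T w a b c 1).natDegree)
    (h12 : (T w a b c 1).natDegree ≠ (T w a b c 2).natDegree)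
    (h02 : (T w a b c 0).natDegree ≠ (T w a b c 2).natDegree) : False := by
  have hne : (X ^ 3 + 1 : F[X]) ≠ 0 := by
    intro h0
    have := congrArg (Polynomial.eval 0) h0
    simp at this
  have hp := prod_T hw h
  have hs := sum_T hw a b c
  have hn : T w a b c 0 * T w a b c 1 * T w a b c 2 ≠ 0 := by
    rw [hp]; exact mul_ne_zero hne (pow_ne_zero _ ha)
  obtain ⟨hn01, hn2⟩ := mul_ne_zero_iff.mp hn
  obtain ⟨hn0, hn1⟩ := mul_ne_zero_iff.mp hn01
  have hd := congrArg natDegree hp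
  rw [natDegree_mul hn01 hn2, natDegree_mul hn0 hn1, natDegree_mul hne (pow_ne_zero _ ha),
    natDegree_pow, natDegree_X3] at hd
  have hsd := congrArg natDegree hs
  rw [natDegree_mul X_ne_zero ha, natDegree_X] at hsd
  have i0 := natDegree_sum_ge h01 h12 h02
  have i1 := natDegree_sum_ge h01.symm h02 h12
  have i2 := natDegree_sum_ge h02.symm h01 h12.symm
  rw [add_comm (T w a b c 1)] at i1
  rw [add_assoc, add_comm] at i2
  omega

/-- Second step of the descent. -/
lemma second_step [IsAlgClosed F] {e f g : F[X]} (hn : NoCommon e f g)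
    (h : (X ^ 3 + 1) * e ^ 3 + f ^ 3 + g ^ 3 = X * (e * f * g)) :
    ∃ a b c : F[X], Sol a b c ∧ e = a * b * c := by
  obtain ⟨w, hw0⟩ := exists_omega F
  have h2 : (2 : F[X]) = 0 := CharTwo.two_eq_zero
  have hw := Cw hw0
  have hp : T w e f g 0 * T w e f g 1 * T w e f g 2 = e ^ 3 := by
    simp only [T, Fin.val_zero, Fin.val_one, Fin.val_two]
    generalize C w = v at *
    generalize (X : F[X]) = x at *
    grind
  have hco : ∀ i j, i ≠ j → T w e f g i ∣ e ^ 3 → IsCoprime (T w e f g i) (T w e f g j) := by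
    intro i j hij hia
    refine coprime_of hn fun z hz hi hj => ?_
    have ha := dvd_of_dvd_cube hz (hi.trans hia)
    exact ⟨ha, dvd_bc hw0 hij ha hi hj⟩
  have c01 := hco 0 1 (by decide) ⟨T w e f g 1 * T w e f g 2, by rw [← hp]; ring⟩
  obtain ⟨a, b, c, h0, h1, h2, ha⟩ := cube3 c01
    (hco 1 2 (by decide) ⟨T w e f g 0 * T w e f g 2, by rw [← hp]; ring⟩)
    (hco 0 2 (by decide) ⟨T w e f g 1 * T w e f g 2, by rw [← hp]; ring⟩) hp
  refine ⟨a, b, c, ⟨?_, ?_⟩, ha⟩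
  · rw [← h0, ← h1, ← h2, sum_T hw0, ha]; ring
  · intro z hz hza hzb _
    rw [h0, h1] at c01
    exact hz.not_unit (c01.isUnit_of_dvd' (dvd_pow hza (by norm_num)) (dvd_pow hzb (by norm_num)))

lemma rho_prime (w : F) (r : Fin 3) : Prime (rho w r) := by
  have : rho w r = X - C (-(w ^ (r : ℕ))) := by simp [rho]
  rw [this]; exact prime_X_sub_C _

lemma rho_natDegree (w : F) (r : Fin 3) : (rho w r).natDegree = 1 := natDegree_X_add_C _

lemma rho_coprime {w : F} (hw : w ^ 2 + w + 1 = 0) {r s : Fin 3} (h : r ≠ s) :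
    IsCoprime (rho w r) (rho w s) := by
  have h2 : (2 : F) = 0 := CharTwo.two_eq_zero
  have e : ∀ r, rho w r = X - C (-(w ^ (r : ℕ))) := by simp [rho]
  rw [e, e]
  apply isCoprime_X_sub_C_of_isUnit_sub
  rw [isUnit_iff_ne_zero]
  fin_cases r <;> fin_cases s <;> simp at h ⊢ <;> grind

lemma exists_index {w : F} (hw : w ^ 2 + w + 1 = 0) {a b c : F[X]} (h : Sol a b c) (r : Fin 3) :
    ∃ i, rho w r ∣ T w a b c i := by
  have hd : rho w r ∣ T w a b c 0 * T w a b c 1 * T w a b c 2 := by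
    rw [prod_T hw h, ← prod_rho hw]
    apply Dvd.dvd.mul_right
    fin_cases r
    · exact ⟨rho w 1 * rho w 2, by simp; ring⟩
    · exact ⟨rho w 0 * rho w 2, by simp; ring⟩
    · exact ⟨rho w 0 * rho w 1, by simp; ring⟩
  rcases (rho_prime w r).dvd_or_dvd hd with hd | hd
  · rcases (rho_prime w r).dvd_or_dvd hd with hd | hd
    · exact ⟨0, hd⟩
    · exact ⟨1, hd⟩
  · exact ⟨2, hd⟩

lemma index_rot {w : F} (hw : w ^ 2 + w + 1 = 0) {a b c : F[X]} {r i : Fin 3}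
    (h : rho w r ∣ T w a b c i) : rho w r ∣ T w b c a (i + r) := by
  have h2 : (2 : F[X]) = 0 := CharTwo.two_eq_zero
  have hw := Cw hw
  have hv3 : C w ^ 3 = 1 := by grind
  have key : T w b c a (i + r) =
      rho w r * (b + C w ^ ((r : ℕ) + 2 * (i : ℕ)) * a) +
        C w ^ ((r : ℕ) + 2 * (i : ℕ)) * T w a b c i := by
    simp only [T, rho, C_pow]
    generalize C w = v at *
    generalize (X : F[X]) = x at *
    fin_cases i <;> fin_cases r <;> simp [Fin.val_add] <;> grind
  rw [key]
  exact dvd_add (dvd_mul_right _ _) (h.mul_left _)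

lemma index_cases : ∀ i : Fin 3 → Fin 3,
    (∃ j, ∀ r, i r = j) ∨ (∃ j, ∀ r, i r + r = j) ∨ (∃ j, ∀ r, i r + r + r = j) ∨
    ((Finset.univ.filter (fun r => i r = 0)).card % 3 ≠
        (Finset.univ.filter (fun r => i r = 1)).card % 3 ∧
      (Finset.univ.filter (fun r => i r = 1)).card % 3 ≠
        (Finset.univ.filter (fun r => i r = 2)).card % 3 ∧
      (Finset.univ.filter (fun r => i r = 0)).card % 3 ≠
        (Finset.univ.filter (fun r => i r = 2)).card % 3) := by
  decide

/-- the cofactor attached to an index function -/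
noncomputable def cof (w : F) (i : Fin 3 → Fin 3) (j : Fin 3) : F[X] :=
  ∏ r ∈ Finset.univ.filter (fun r => i r = j), rho w r

lemma cof_prod {w : F} (hw : w ^ 2 + w + 1 = 0) (i : Fin 3 → Fin 3) :
    cof w i 0 * cof w i 1 * cof w i 2 = X ^ 3 + 1 := by
  have := Finset.prod_fiberwise (Finset.univ : Finset (Fin 3)) i (rho w)
  rw [Fin.prod_univ_three, Fin.prod_univ_three, prod_rho hw] at this
  exact this

lemma cof_dvd {w : F} (hw : w ^ 2 + w + 1 = 0) {a b c : F[X]} {i : Fin 3 → Fin 3}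
    (hi : ∀ r, rho w r ∣ T w a b c (i r)) (j : Fin 3) : cof w i j ∣ T w a b c j := by
  apply Finset.prod_dvd_of_coprime
  · intro r _ s _ hrs
    exact rho_coprime hw hrs
  · intro r hr
    have : i r = j := by simpa using hr
    rw [← this]; exact hi r

lemma cof_natDegree (w : F) (i : Fin 3 → Fin 3) (j : Fin 3) :
    (cof w i j).natDegree = (Finset.univ.filter (fun r => i r = j)).card := by
  rw [cof, natDegree_prod _ _ (fun r _ => (rho_prime w r).ne_zero)]
  simp [rho_natDegree]

lemma const_case [IsAlgClosed F] {w : F} (hw : w ^ 2 + w + 1 = 0) {a b c : F[X]} (h : Sol a b c)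
    {j : Fin 3} (hj : ∀ r, rho w r ∣ T w a b c j) :
    ∃ A B C : F[X], Sol A B C ∧ A * B * C ∣ a := by
  have hc := cof_prod hw (fun _ => j)
  obtain ⟨e, he, hae⟩ := T_eq_cubes hw h hc (cof_dvd hw hj)
  have hsum := sum_T hw a b c
  have hN : NoCommon (e 0) (e 1) (e 2) := by
    intro z hz h0 h1 h2
    have ha : z ∣ a := by rw [hae]; exact h2.mul_left _
    obtain ⟨hb, hc⟩ := dvd_bc hw (i := 0) (j := 1) (by decide) ha
      (by rw [he]; exact (dvd_pow h0 (by norm_num)).mul_left _)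
      (by rw [he]; exact (dvd_pow h1 (by norm_num)).mul_left _)
    exact h.2 z hz ha hb hc
  rw [he 0, he 1, he 2] at hsum
  fin_cases j
  · have c0 : cof w (fun _ => (0 : Fin 3)) 1 = 1 := by simp [cof]
    have c1 : cof w (fun _ => (0 : Fin 3)) 2 = 1 := by simp [cof]
    simp only [Fin.zero_eta, Fin.mk_one, Fin.reduceFinMk, c0, c1, mul_one, one_mul] at hc hsum
    rw [hc] at hsum
    obtain ⟨A, B, C, hS, hABC⟩ := second_step (e := e 0) (f := e 1) (g := e 2) hN
      (by rw [hae] at hsum; linear_combination hsum)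
    exact ⟨A, B, C, hS, by rw [← hABC, hae]; exact ⟨e 1 * e 2, by ring⟩⟩
  · have c0 : cof w (fun _ => (1 : Fin 3)) 0 = 1 := by simp [cof]
    have c1 : cof w (fun _ => (1 : Fin 3)) 2 = 1 := by simp [cof]
    simp only [Fin.zero_eta, Fin.mk_one, Fin.reduceFinMk, c0, c1, mul_one, one_mul] at hc hsum
    rw [hc] at hsum
    obtain ⟨A, B, C, hS, hABC⟩ := second_step (e := e 1) (f := e 0) (g := e 2)
      (fun z hz h1 h0 h2 => hN z hz h0 h1 h2)
      (by rw [hae] at hsum; linear_combination hsum)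
    exact ⟨A, B, C, hS, by rw [← hABC, hae]; exact ⟨e 0 * e 2, by ring⟩⟩
  · have c0 : cof w (fun _ => (2 : Fin 3)) 0 = 1 := by simp [cof]
    have c1 : cof w (fun _ => (2 : Fin 3)) 1 = 1 := by simp [cof]
    simp only [Fin.zero_eta, Fin.mk_one, Fin.reduceFinMk, c0, c1, mul_one, one_mul] at hc hsum
    rw [hc] at hsum
    obtain ⟨A, B, C, hS, hABC⟩ := second_step (e := e 2) (f := e 0) (g := e 1)
      (fun z hz h2 h0 h1 => hN z hz h0 h1 h2)
      (by rw [hae] at hsum; linear_combination hsum)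
    exact ⟨A, B, C, hS, by rw [← hABC, hae]; exact ⟨e 0 * e 1, by ring⟩⟩

lemma natDegree_lt {a b c : F[X]} (h : Sol a b c) (h0 : a * b * c ≠ 0) {d : F[X]}
    (hd : d ∣ a) : d.natDegree < (a * b * c).natDegree := by
  obtain ⟨hab, hc⟩ := mul_ne_zero_iff.mp h0
  obtain ⟨ha, hb⟩ := mul_ne_zero_iff.mp hab
  have hle := natDegree_le_of_dvd hd ha
  rw [natDegree_mul hab hc, natDegree_mul ha hb]
  by_contra hlt
  have hb0 : b.natDegree = 0 := by omega
  have hc0 : c.natDegree = 0 := by omega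
  have he := h.1
  rw [eq_C_of_natDegree_eq_zero hb0, eq_C_of_natDegree_eq_zero hc0] at he
  rw [eq_C_of_natDegree_eq_zero hb0] at hb
  rw [eq_C_of_natDegree_eq_zero hc0] at hc
  have h3 := congrArg natDegree he
  rw [add_assoc, ← C_pow, ← C_pow, ← C_add, natDegree_add_C,
    natDegree_mul (mul_ne_zero (mul_ne_zero X_ne_zero ha) hb) hc,
    natDegree_mul (mul_ne_zero X_ne_zero ha) hb, natDegree_mul X_ne_zero ha, natDegree_pow] at h3
  simp at h3
  omega

theorem hesse [IsAlgClosed F] : ∀ (n : ℕ) (a b c : F[X]), (a * b * c).natDegree = n →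
    Sol a b c → a * b * c = 0 := by
  obtain ⟨w, hw⟩ := exists_omega F
  intro n
  induction n using Nat.strong_induction_on with
  | _ n ih =>
  intro a b c hn h
  by_contra h0
  have key : ∀ a b c : F[X], (a * b * c).natDegree = n → Sol a b c → a * b * c ≠ 0 →
      ∀ j, ¬ (∀ r, rho w r ∣ T w a b c j) := by
    intro a b c hn h h0 j hj
    obtain ⟨A, B, C, hS, hd⟩ := const_case hw h hj
    have := ih _ (hn ▸ natDegree_lt h h0 hd) A B C rfl hS
    rw [this, zero_dvd_iff] at hd
    rw [hd] at h0
    simp at h0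
  choose i hi using exists_index hw h
  have ha : a ≠ 0 := by rintro rfl; simp at h0
  have r1 : b * c * a = a * b * c := by ring
  have r2 : c * a * b = a * b * c := by ring
  rcases index_cases i with ⟨j, hj⟩ | ⟨j, hj⟩ | ⟨j, hj⟩ | ⟨h01, h12, h02⟩
  · exact key a b c hn h h0 j (fun r => hj r ▸ hi r)
  · exact key b c a (r1 ▸ hn) h.rot (r1 ▸ h0) j (fun r => hj r ▸ index_rot hw (hi r))
  · exact key c a b (r2 ▸ hn) h.rot.rot (r2 ▸ h0) j
      (fun r => hj r ▸ index_rot hw (index_rot hw (hi r)))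
  · obtain ⟨e, he, hae⟩ := T_eq_cubes hw h (cof_prod hw i) (cof_dvd hw hi)
    have hX : (X ^ 3 + 1 : F[X]) ≠ 0 := by
      intro h
      have := congrArg natDegree h
      rw [natDegree_X3] at this
      simp at this
    have hcne : ∀ j, cof w i j ≠ 0 := fun j =>
      Finset.prod_ne_zero_iff.mpr (fun r _ => (rho_prime w r).ne_zero)
    have hene : ∀ j, e j ≠ 0 := by
      intro j hj
      apply ha
      rw [hae]
      fin_cases j <;> simp at hj <;> simp [hj]
    have hdeg : ∀ j, (T w a b c j).natDegree =
        (Finset.univ.filter (fun r => i r = j)).card + 3 * (e j).natDegree := by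
      intro j
      rw [he j, natDegree_mul (hcne j) (pow_ne_zero _ (hene j)), natDegree_pow, cof_natDegree]
    apply not_distinct hw h ha <;> rw [hdeg, hdeg] <;> omega

/-- Clearing common factors. -/
lemma exists_primitive : ∀ (n : ℕ) (p q r : F[X]), r ≠ 0 → r.natDegree = n →
    ∃ p' q' r' : F[X], r' ≠ 0 ∧ p * r' = p' * r ∧ q * r' = q' * r ∧ NoCommon p' q' r' := by
  intro n
  induction n using Nat.strong_induction_on with
  | _ n ih =>
  intro p q r hr hn
  by_cases hN : NoCommon p q r
  · exact ⟨p, q, r, hr, rfl, rfl, hN⟩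
  · simp only [NoCommon, not_forall, not_not] at hN
    obtain ⟨z, hz, ⟨p, rfl⟩, ⟨q, rfl⟩, ⟨r, rfl⟩⟩ := hN
    have hr' : r ≠ 0 := right_ne_zero_of_mul hr
    have hzd : 0 < z.natDegree := hz.irreducible.natDegree_pos
    have hlt : r.natDegree < n := by
      rw [← hn, natDegree_mul hz.ne_zero hr']; omega
    obtain ⟨p', q', r', h0, h1, h2, h3⟩ := ih _ hlt p q r hr' rfl
    exact ⟨p', q', r', h0, by linear_combination z * h1, by linear_combination z * h2, h3⟩

lemma ratl_poly [IsAlgClosed F] {p q r : F[X]} (hN : NoCommon p q r)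
    (h : q * r * (q + X * p + r) = p ^ 3) : p = 0 := by
  have h2 : (2 : F[X]) = 0 := CharTwo.two_eq_zero
  have c1 : IsCoprime q r := coprime_of hN fun z hz h1 h2 =>
    ⟨dvd_of_dvd_cube hz (h ▸ (h1.mul_right _).mul_right _), h1, h2⟩
  have c2 : IsCoprime r (q + X * p + r) := coprime_of hN fun z hz h1 h2 => by
    have hp : z ∣ p := dvd_of_dvd_cube hz (h ▸ h2.mul_left _)
    refine ⟨hp, ?_, h1⟩
    have := dvd_sub (dvd_sub h2 h1) (hp.mul_left X)
    convert this using 1; ring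
  have c3 : IsCoprime q (q + X * p + r) := coprime_of hN fun z hz h1 h2 => by
    have hp : z ∣ p := dvd_of_dvd_cube hz (h ▸ h2.mul_left _)
    refine ⟨hp, h1, ?_⟩
    have := dvd_sub (dvd_sub h2 h1) (hp.mul_left X)
    convert this using 1; ring
  obtain ⟨u, v, s, hu, hv, hs, hp⟩ := cube3 c1 c2 c3 h
  rw [hp]
  refine hesse _ u v s rfl ⟨?_, ?_⟩
  · rw [← hu, ← hv, ← hs]
    rw [mul_assoc, mul_assoc, ← mul_assoc u, ← hp]
    linear_combination (q + r) * h2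
  · intro z hz hzu hzv _
    rw [hu, hv] at c1
    exact hz.not_unit (c1.isUnit_of_dvd' (dvd_pow hzu (by norm_num)) (dvd_pow hzv (by norm_num)))

theorem ratl_points [IsAlgClosed F] {x y : RatFunc F}
    (h : y ^ 2 + RatFunc.X * x * y + y = x ^ 3) : x = 0 := by
  let φ := algebraMap F[X] (RatFunc F)
  have hφ : Function.Injective φ := RatFunc.algebraMap_injective F
  have hxd : φ x.denom ≠ 0 := RatFunc.algebraMap_ne_zero x.denom_ne_zero
  have hyd : φ y.denom ≠ 0 := RatFunc.algebraMap_ne_zero y.denom_ne_zero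
  have hx : φ x.num = x * φ x.denom := by
    exact (div_eq_iff hxd).mp (RatFunc.num_div_denom x)
  have hy : φ y.num = y * φ y.denom := by
    exact (div_eq_iff hyd).mp (RatFunc.num_div_denom y)
  obtain ⟨p, q, r, hr, h1, h2, hN⟩ := exists_primitive _ (x.num * y.denom) (y.num * x.denom)
    (x.denom * y.denom) (mul_ne_zero x.denom_ne_zero y.denom_ne_zero) rfl
  have hφr : φ r ≠ 0 := RatFunc.algebraMap_ne_zero hr
  have hp : φ p = x * φ r := by
    have := congrArg φ h1
    simp only [map_mul, hx] at this
    apply mul_right_cancel₀ (mul_ne_zero hxd hyd)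
    linear_combination -this
  have hq : φ q = y * φ r := by
    have := congrArg φ h2
    simp only [map_mul, hy] at this
    apply mul_right_cancel₀ (mul_ne_zero hxd hyd)
    linear_combination -this
  have hX : φ X = RatFunc.X := RatFunc.algebraMap_X
  have : p = 0 := by
    apply ratl_poly hN
    apply hφ
    simp only [map_mul, map_add, map_pow, hp, hq, hX]
    linear_combination (φ r) ^ 3 * h
  rw [this, map_zero] at hp
  simpa [hφr] using hp.symm

end Hesse

lemma t_ne_zero : t ≠ 0 := RatFunc.X_ne_zero

lemma t_cube_ne_one : t ^ 3 ≠ 1 := by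
  intro h
  have h2 : (Polynomial.X ^ 3 : Polynomial k) = 1 := by
    apply RatFunc.algebraMap_injective k
    simpa [t, RatFunc.algebraMap_X] using h
  have := congrArg Polynomial.natDegree h2
  simp at this

lemma W_equation (x y : K) : W.Equation x y ↔ y ^ 2 + t ^ 2 * x * y + y = x ^ 3 := by
  rw [WeierstrassCurve.Affine.equation_iff]
  simp [W]

lemma W_nonsingular (x y : K) : W.Nonsingular x y ↔ (y ^ 2 + t ^ 2 * x * y + y = x ^ 3 ∧
    (t ^ 2 * y ≠ x ^ 2 ∨ t ^ 2 * x + 1 ≠ 0)) := by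
  have h2 : (2 : K) = 0 := CharTwo.two_eq_zero
  rw [WeierstrassCurve.Affine.nonsingular_iff, W_equation]
  have e1 : (3 * x ^ 2 + 2 * W.a₂ * x + W.a₄) = x ^ 2 := by
    simp only [W]; linear_combination x ^ 2 * h2
  have e2 : y = -y - W.a₁ * x - W.a₃ ↔ t ^ 2 * x + 1 = 0 := by
    simp only [W]
    constructor
    · intro h; linear_combination h - y * h2
    · intro h; linear_combination h + y * h2
  rw [e1, Ne, Ne, e2]
  rfl

lemma W_points {x y : K} (h : y ^ 2 + t ^ 2 * x * y + y = x ^ 3) :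
    (x = 0 ∧ y = 0) ∨ (x = 0 ∧ y = 1) ∨ (x = t ∧ y = 1) ∨ (x = t ∧ y = t ^ 3) ∨
      (x = (t ^ 2)⁻¹ ∧ y = (t ^ 3)⁻¹) := by
  have h2 : (2 : K) = 0 := CharTwo.two_eq_zero
  have ht := t_ne_zero
  by_cases hd : t ^ 2 * x + 1 = 0
  · right; right; right; right
    have hx : x = (t ^ 2)⁻¹ := by
      rw [← mul_eq_one_iff_eq_inv₀ (pow_ne_zero _ ht)]
      linear_combination hd - h2
    refine ⟨hx, ?_⟩
    have hy : (y - (t ^ 3)⁻¹) ^ 2 = 0 := by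
      have e : y ^ 2 = x ^ 3 := by linear_combination h - y * hd
      have e' : x ^ 3 = ((t ^ 3)⁻¹) ^ 2 := by rw [hx]; field_simp
      linear_combination e + e' - (y * (t ^ 3)⁻¹ - ((t ^ 3)⁻¹) ^ 2) * h2
    exact sub_eq_zero.mp (pow_eq_zero_iff (by norm_num) |>.mp hy)
  · have key : (x ^ 2 + t * x) / (t ^ 2 * x + 1) = 0 := by
      obtain ⟨a, ha⟩ : ∃ a : K, a * (t ^ 2 * x + 1) = x ^ 2 + t * x :=
        ⟨(x ^ 2 + t * x) / (t ^ 2 * x + 1), div_mul_cancel₀ _ hd⟩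
      obtain ⟨b, hb⟩ : ∃ b : K, b * (t ^ 2 * x + 1) ^ 2 = (1 + t ^ 3) * x ^ 3 + (t * x ^ 2 + 1) * y :=
        ⟨((1 + t ^ 3) * x ^ 3 + (t * x ^ 2 + 1) * y) / (t ^ 2 * x + 1) ^ 2,
          div_mul_cancel₀ _ (pow_ne_zero _ hd)⟩
      have e : (b ^ 2 + t * a * b + b - a ^ 3) * (t ^ 2 * x + 1) ^ 4 = 0 := by
        have : (b ^ 2 + t * a * b + b - a ^ 3) * (t ^ 2 * x + 1) ^ 4 =
          (b * (t ^ 2 * x + 1) ^ 2) ^ 2 +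
          t * (a * (t ^ 2 * x + 1)) * (b * (t ^ 2 * x + 1) ^ 2) * (t ^ 2 * x + 1) +
          (b * (t ^ 2 * x + 1) ^ 2) * (t ^ 2 * x + 1) ^ 2 -
          (a * (t ^ 2 * x + 1)) ^ 3 * (t ^ 2 * x + 1) := by ring
        rw [this, ha, hb]
        clear this ha hb hd
        generalize t = s at *
        grind
      have e2 := (mul_eq_zero.mp e).resolve_right (pow_ne_zero _ hd)
      have a0 : a = 0 := ratl_points (y := b) (sub_eq_zero.mp e2)
      rw [← ha, a0]; simp
    have hx : x * (x + t) = 0 := by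
      have := (div_eq_zero_iff.mp key).resolve_right hd
      linear_combination this
    rcases mul_eq_zero.mp hx with hx | hx
    · have : y * (y + 1) = 0 := by rw [hx] at h; linear_combination h
      rcases mul_eq_zero.mp this with hy | hy
      · exact Or.inl ⟨hx, hy⟩
      · exact Or.inr (Or.inl ⟨hx, by linear_combination hy - h2⟩)
    · have hx : x = t := by linear_combination hx - t * h2
      have : (y + 1) * (y + t ^ 3) = 0 := by
        rw [hx] at h; linear_combination h + t ^ 3 * h2
      rcases mul_eq_zero.mp this with hy | hy
      · exact Or.inr (Or.inr (Or.inl ⟨hx, by linear_combination hy - h2⟩))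
      · exact Or.inr (Or.inr (Or.inr (Or.inl ⟨hx, by linear_combination hy - t ^ 3 * h2⟩)))

lemma card_points : Nat.card W.Point = 6 := by
  have h2 : (2 : K) = 0 := CharTwo.two_eq_zero
  have ht := t_ne_zero
  have ht3 := t_cube_ne_one
  have hi : t ≠ (t ^ 2)⁻¹ := by
    rw [Ne, ← mul_eq_one_iff_eq_inv₀ (pow_ne_zero _ ht)]
    intro h; exact ht3 (by linear_combination h)
  have hp2 : 0 ≠ t ^ 2 := (pow_ne_zero _ ht).symm
  have hD : t ^ 2 * t + 1 ≠ 0 := fun h => ht3 (by linear_combination h - h2)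
  have n0 : W.Nonsingular 0 0 := (W_nonsingular _ _).mpr ⟨by ring, Or.inr (by simp)⟩
  have n1 : W.Nonsingular 0 1 :=
    (W_nonsingular _ _).mpr ⟨by linear_combination h2, Or.inr (by simp)⟩
  have n2 : W.Nonsingular t 1 :=
    (W_nonsingular _ _).mpr ⟨by linear_combination h2, Or.inr hD⟩
  have n3 : W.Nonsingular t (t ^ 3) :=
    (W_nonsingular _ _).mpr ⟨by linear_combination t ^ 6 * h2, Or.inr hD⟩
  have n4 : W.Nonsingular (t ^ 2)⁻¹ (t ^ 3)⁻¹ := by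
    refine (W_nonsingular _ _).mpr ⟨?_, Or.inl ?_⟩
    · have e : t ^ 2 * (t ^ 2)⁻¹ = 1 := mul_inv_cancel₀ (pow_ne_zero _ ht)
      have e' : ((t ^ 2)⁻¹) ^ 3 = ((t ^ 3)⁻¹) ^ 2 := by field_simp
      rw [e, e']; linear_combination (t ^ 3)⁻¹ * h2
    · intro h
      apply ht3
      field_simp at h
      exact h
  let f : Fin 6 → W.Point := ![.zero, .some _ _ n0, .some _ _ n1, .some _ _ n2, .some _ _ n3,
    .some _ _ n4]
  have hf : Function.Bijective f := by
    constructor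
    · intro i j hij
      fin_cases i <;> fin_cases j <;>
        simp [f, hp2, ht, ht.symm, hi, hi.symm, ht3, ht3.symm] at hij ⊢
    · intro P
      match P with
      | .zero => exact ⟨0, rfl⟩
      | .some x y h =>
        rcases W_points ((W_equation _ _).mp h.1) with ⟨rfl, rfl⟩ | ⟨rfl, rfl⟩ | ⟨rfl, rfl⟩ |
          ⟨rfl, rfl⟩ | ⟨rfl, rfl⟩
        · exact ⟨1, rfl⟩
        · exact ⟨2, rfl⟩
        · exact ⟨3, rfl⟩
        · exact ⟨4, rfl⟩
        · exact ⟨5, rfl⟩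
  rw [← Nat.card_eq_of_bijective f hf]
  simp

open scoped Classical in
/-- The group of points of `W : y² + t²xy + y = x³` over `K = k(t)` is isomorphic to `ℤ/6ℤ`. -/
theorem points_iso_zmod_six : Nonempty (W.Point ≃+ (ZMod 6)) := by
  have hc := card_points
  have : Finite W.Point := Nat.finite_of_card_ne_zero (by rw [hc]; norm_num)
  have : Fact (Nat.Prime 2) := ⟨Nat.prime_two⟩
  have : Fact (Nat.Prime 3) := ⟨Nat.prime_three⟩
  obtain ⟨P, hP⟩ := exists_prime_addOrderOf_dvd_card' (G := W.Point) 2 (by rw [hc]; norm_num)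
  obtain ⟨Q, hQ⟩ := exists_prime_addOrderOf_dvd_card' (G := W.Point) 3 (by rw [hc]; norm_num)
  have h6 : addOrderOf (P + Q) = Nat.card W.Point := by
    rw [(AddCommute.all P Q).addOrderOf_add_eq_mul_addOrderOf_of_coprime
      (by rw [hP, hQ]; norm_num), hP, hQ, hc]
  have e := zmodAddCyclicAddEquiv (isAddCyclic_of_addOrderOf_eq_card _ h6)
  rw [hc] at e
  exact ⟨e.symm⟩
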